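/- arXiv:math/0306375 — 2 statements merged into one kernel-verified Lean document; each statement's English description precedes it below -/
import Mathlib

section
/- For every d > 0 there exists a constant K(d) > 1 with the following property. Let n ≥ 1 and let z₀, z₁, …, z_n = z₀ be points of 𝔻 \ {0} such that for each i ∈ {0, …, n−1} there is a C¹ path γ_i : [0,1] → 𝔻 \ {0} from z_i to z_{i+1} of hyperbolic length at most d, and such that the concatenation γ of the γ_i admits a continuous lift w : [0,1] → ℂ with exp(w(t)) = γ(t) and |Im w(1) − Im w(0)| ≥ 2π (the chain makes at least one turn around 0). Set Z = {z₀, …, z_{n−1}}. Then every holomorphic covering map φ : 𝔻 → 𝔻 \ Z with φ(0) = 0 satisfies ln|φ′(0)| ≤ ln(max_i |z_i|)/K(d) < 0. -/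
open Complex Metric Set

noncomputable section

/-- `IsCoveringMap` with its meaning in Mathlib of December 2024 (each point lies in the base set
of a `Trivialization` whose fiber is the discrete preimage of that point). -/
def IsCoveringMapOld {E X : Type*} [TopologicalSpace E] [TopologicalSpace X] (f : E → X) : Prop :=
  ∀ x, DiscreteTopology (f ⁻¹' {x}) ∧ ∃ t : Bundle.Trivialization (f ⁻¹' {x}) f, x ∈ t.baseSet

/-- A holomorphic covering map from the unit disc onto `U`. -/
def IsHoloCover (φ : ℂ → ℂ) (U : Set ℂ) : Prop :=
  DifferentiableOn ℂ φ (Metric.ball 0 1) ∧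
  ∃ h : Set.MapsTo φ (Metric.ball 0 1) U,
    IsCoveringMapOld (Set.MapsTo.restrict φ (Metric.ball 0 1) U h)

/-- Hyperbolic length of a `C¹` path `γ : [0,1] → 𝔻`. -/
def hypLength (γ : ℝ → ℂ) : ℝ :=
  ∫ t in (0:ℝ)..1, 2 * ‖deriv γ t‖ / (1 - ‖γ t‖ ^ 2)

/-!
Let `f` be a holomorphic self-map of the disc fixing `0` and omitting a value `b`. The Schwarz-Pick
lemma for a square root of `mobius b ∘ f` improves Schwarz's inequality `‖f ζ‖ ≤ ‖ζ‖` by a factor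
which is bounded away from `1` as long as `f ζ` stays at bounded hyperbolic distance from `b`.
Every point of the concatenated curve is within distance `d` of one of the omitted points `z i`, so
on the preimage of the curve `‖f ζ‖ ≤ R * ‖ζ‖` with `1 - R` of order `(1 - max ‖z i‖) * exp (-d)`.
The curve bounds the open set of points around which it winds, and `0` is one of them. The maximum
principle for `f ζ / ζ` on the preimage of this set then gives `‖deriv f 0‖ ≤ R`, which is the claim
unless `max ‖z i‖` is small. In that case, Koebe's bound `‖deriv f 0‖ ≤ 2 * √‖z 0‖` suffices.
-/

open Filter Topology
open scoped ComplexConjugate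

/-- The disc automorphism `w ↦ (w - a) / (1 - conj a * w)` carrying `a` to `0`. The modulus of
`mobius a w` is `tanh (d / 2)`, where `d` is the hyperbolic distance from `a` to `w`. -/
def mobius (a w : ℂ) : ℂ := (w - a) / (1 - conj a * w)

section Mobius

variable {a w : ℂ}

lemma mobius_self (a : ℂ) : mobius a a = 0 := by simp [mobius]

lemma mobius_zero_right (a : ℂ) : mobius a 0 = -a := by simp [mobius]

lemma mobius_sq_sq (a w : ℂ) : mobius (a ^ 2) (w ^ 2) = mobius a w * mobius (-a) w := by
  simp only [mobius, div_mul_div_comm, map_pow, map_neg]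
  congr 1 <;> ring

lemma one_sub_conj_mul_ne_zero (ha : ‖a‖ < 1) (hw : ‖w‖ < 1) : 1 - conj a * w ≠ 0 := by
  refine fun h => (mul_lt_one_of_nonneg_of_lt_one_left (norm_nonneg a) ha hw.le).ne ?_
  rw [← Complex.norm_conj a, ← norm_mul, ← sub_eq_zero.1 h, norm_one]

lemma sq_norm_one_sub_conj_mul_sub_sq_norm_sub (a w : ℂ) :
    ‖1 - conj a * w‖ ^ 2 - ‖w - a‖ ^ 2 = (1 - ‖a‖ ^ 2) * (1 - ‖w‖ ^ 2) := by
  simp only [← Complex.normSq_eq_norm_sq, Complex.normSq_apply, sub_re, sub_im, mul_re, mul_im,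
    one_re, one_im, conj_re, conj_im]
  ring

lemma one_sub_sq_norm_mobius (ha : ‖a‖ < 1) (hw : ‖w‖ < 1) :
    1 - ‖mobius a w‖ ^ 2 = (1 - ‖a‖ ^ 2) * (1 - ‖w‖ ^ 2) / ‖1 - conj a * w‖ ^ 2 := by
  have hden := norm_pos_iff.2 (one_sub_conj_mul_ne_zero ha hw)
  rw [mobius, norm_div, ← sq_norm_one_sub_conj_mul_sub_sq_norm_sub, div_pow, sub_div,
    div_self (by positivity)]

lemma one_sub_sq_norm_pos (hw : ‖w‖ < 1) : 0 < 1 - ‖w‖ ^ 2 :=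
  sub_pos.2 (pow_lt_one₀ (norm_nonneg w) hw two_ne_zero)

lemma norm_mobius_lt_one (ha : ‖a‖ < 1) (hw : ‖w‖ < 1) : ‖mobius a w‖ < 1 := by
  have hden := norm_pos_iff.2 (one_sub_conj_mul_ne_zero ha hw)
  have hpos : 0 < 1 - ‖mobius a w‖ ^ 2 := by
    rw [one_sub_sq_norm_mobius ha hw]
    exact div_pos (mul_pos (one_sub_sq_norm_pos ha) (one_sub_sq_norm_pos hw)) (by positivity)
  exact (sq_lt_one_iff₀ (norm_nonneg _)).1 (sub_pos.1 hpos)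

lemma mobius_neg_mobius (ha : ‖a‖ < 1) (hw : ‖w‖ < 1) : mobius (-a) (mobius a w) = w := by
  have hden := one_sub_conj_mul_ne_zero ha hw
  have ha2 := one_sub_conj_mul_ne_zero ha ha
  have hnum : (w - a) / (1 - conj a * w) + a = w * (1 - conj a * a) / (1 - conj a * w) := by
    rw [div_add' _ _ _ hden]
    ring
  have hquot : 1 + conj a * ((w - a) / (1 - conj a * w)) =
      (1 - conj a * a) / (1 - conj a * w) := by
    rw [← mul_div_assoc, add_div' _ _ _ hden]
    ring
  rw [mobius, mobius, map_neg, neg_mul, sub_neg_eq_add, sub_neg_eq_add, hnum, hquot,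
    div_div_div_cancel_right₀ hden, mul_div_cancel_right₀ _ ha2]

lemma mul_one_sub_sq_norm_le_one_sub_sq_norm_mobius (ha : ‖a‖ < 1) (hw : ‖w‖ < 1) :
    (1 - ‖a‖) / 2 * (1 - ‖w‖ ^ 2) ≤ 1 - ‖mobius a w‖ ^ 2 := by
  have hden := norm_pos_iff.2 (one_sub_conj_mul_ne_zero ha hw)
  have hden_le : ‖1 - conj a * w‖ ≤ 1 + ‖a‖ :=
    calc ‖1 - conj a * w‖ ≤ ‖(1 : ℂ)‖ + ‖conj a * w‖ := norm_sub_le _ _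
      _ = 1 + ‖a‖ * ‖w‖ := by rw [norm_one, norm_mul, Complex.norm_conj]
      _ ≤ 1 + ‖a‖ := by gcongr; exact mul_le_of_le_one_right (norm_nonneg a) hw.le
  have hfactor : (1 - ‖a‖) / 2 ≤ (1 - ‖a‖ ^ 2) / ‖1 - conj a * w‖ ^ 2 := by
    rw [le_div_iff₀ (by positivity)]
    have hsq : ‖1 - conj a * w‖ ^ 2 ≤ 2 * (1 + ‖a‖) := by nlinarith
    nlinarith
  rw [one_sub_sq_norm_mobius ha hw, mul_div_right_comm]
  exact mul_le_mul_of_nonneg_right hfactor (one_sub_sq_norm_pos hw).le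

lemma hasDerivAt_mobius (ha : ‖a‖ < 1) (hw : ‖w‖ < 1) :
    HasDerivAt (mobius a) (((1 - ‖a‖ ^ 2 : ℝ) : ℂ) / (1 - conj a * w) ^ 2) w := by
  have hden := one_sub_conj_mul_ne_zero ha hw
  refine (((hasDerivAt_id w).sub_const a).div
    (((hasDerivAt_id w).const_mul (conj a)).const_sub 1) hden).congr_deriv ?_
  push_cast
  rw [← Complex.conj_mul', id]
  ring

lemma differentiableOn_mobius (ha : ‖a‖ < 1) : DifferentiableOn ℂ (mobius a) (ball 0 1) :=
  fun _ hw => (hasDerivAt_mobius ha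
    (mem_ball_zero_iff.1 hw)).differentiableAt.differentiableWithinAt

lemma mapsTo_mobius_ball (ha : ‖a‖ < 1) : MapsTo (mobius a) (ball 0 1) (ball 0 1) :=
  fun _ hw => mem_ball_zero_iff.2 (norm_mobius_lt_one ha (mem_ball_zero_iff.1 hw))

end Mobius

lemma norm_mobius_apply_zero_le_of_mapsTo_ball {g : ℂ → ℂ} (hg : DifferentiableOn ℂ g (ball 0 1))
    (hmaps : MapsTo g (ball 0 1) (ball 0 1)) {ζ : ℂ} (hζ : ζ ∈ ball (0 : ℂ) 1) :
    ‖mobius (g 0) (g ζ)‖ ≤ ‖ζ‖ := by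
  have hg0 : ‖g 0‖ < 1 := mem_ball_zero_iff.1 (hmaps (mem_ball_self one_pos))
  exact Complex.norm_le_norm_of_mapsTo_ball (f := mobius (g 0) ∘ g)
    ((differentiableOn_mobius hg0).comp hg hmaps)
    (((mapsTo_mobius_ball hg0).comp hmaps).mono_right ball_subset_closedBall)
    (mobius_self _) (mem_ball_zero_iff.1 hζ)

lemma differentiableAt_of_sq {𝕜 : Type*} [NontriviallyNormedField 𝕜] [NeZero (2 : 𝕜)]
    {s : 𝕜 → 𝕜} {x : 𝕜} (hs : ContinuousAt s x) (hx : s x ≠ 0)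
    (hsq : DifferentiableAt 𝕜 (fun y => s y ^ 2) x) : DifferentiableAt 𝕜 s x := by
  have hsum : ContinuousAt (fun y => s y + s x) x := hs.add continuousAt_const
  have hsum_ne : s x + s x ≠ 0 := by rw [← two_mul]; exact mul_ne_zero two_ne_zero hx
  refine (hasDerivAt_iff_tendsto_slope.2 ?_).differentiableAt
    (f' := deriv (fun y => s y ^ 2) x / (s x + s x))
  refine ((hasDerivAt_iff_tendsto_slope.1 hsq.hasDerivAt).div
    (hsum.tendsto.mono_left nhdsWithin_le_nhds) hsum_ne).congr' ?_
  filter_upwards [nhdsWithin_le_nhds (hsum.eventually_ne hsum_ne)] with y hy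
  rw [Pi.div_apply, slope_def_field, slope_def_field, sq_sub_sq]
  field_simp

lemma exists_differentiableOn_sq_eq_of_convex {U : Set ℂ} (hU : IsOpen U) (hconv : Convex ℝ U)
    (hne : U.Nonempty) {g : ℂ → ℂ} (hg : DifferentiableOn ℂ g U) (hg0 : ∀ x ∈ U, g x ≠ 0) :
    ∃ s : ℂ → ℂ, DifferentiableOn ℂ s U ∧ ∀ x, s x ^ 2 = g x := by
  have := hconv.contractibleSpace hne
  have hsc : IsSimplyConnected U := SimplyConnectedSpace.ofContractible U
  obtain ⟨s, hs, hsq⟩ := exists_continuousOn_pow_eq hsc hU hg.continuousOn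
    (fun ⟨x, hx, h⟩ => hg0 x hx h) two_ne_zero
  refine ⟨s, fun x hx => (differentiableAt_of_sq (hs.continuousAt (hU.mem_nhds hx)) ?_
    ?_).differentiableWithinAt, hsq⟩
  · exact fun h => hg0 x hx (by rw [← hsq, h, zero_pow two_ne_zero])
  · simpa only [hsq] using hg.differentiableAt (hU.mem_nhds hx)

section OmittedValue

variable {f : ℂ → ℂ} {b : ℂ}

-- The square root `s` of `mobius b ∘ f` gives `f = mobius (s 0) ∘ s * mobius (-s 0) ∘ s`, and
-- the first factor is at most `‖ζ‖` by the Schwarz-Pick lemma.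
lemma exists_sqrt_mobius_comp (hf : DifferentiableOn ℂ f (ball 0 1))
    (hmaps : MapsTo f (ball 0 1) (ball 0 1)) (hf0 : f 0 = 0) (hb : ‖b‖ < 1)
    (hfb : ∀ ζ ∈ ball 0 1, f ζ ≠ b) :
    ∃ s : ℂ → ℂ, ContinuousOn s (ball 0 1) ∧ MapsTo s (ball 0 1) (ball 0 1) ∧
      (∀ ζ, s ζ ^ 2 = mobius b (f ζ)) ∧
      ∀ ζ ∈ ball 0 1, ‖f ζ‖ ≤ ‖ζ‖ * ‖mobius (-s 0) (s ζ)‖ := by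
  have hlt : ∀ ζ ∈ ball 0 1, ‖f ζ‖ < 1 := fun ζ hζ => mem_ball_zero_iff.1 (hmaps hζ)
  obtain ⟨s, hs, hsq⟩ := exists_differentiableOn_sq_eq_of_convex isOpen_ball
    (convex_ball (0 : ℂ) 1) ⟨0, mem_ball_self one_pos⟩
    ((differentiableOn_mobius hb).comp hf hmaps) fun ζ hζ =>
      div_ne_zero (sub_ne_zero.2 (hfb ζ hζ)) (one_sub_conj_mul_ne_zero hb (hlt ζ hζ))
  have hs_maps : MapsTo s (ball 0 1) (ball 0 1) := fun ζ hζ => mem_ball_zero_iff.2 <|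
    (sq_lt_one_iff₀ (norm_nonneg _)).1 <| by
      rw [← norm_pow, hsq]; exact norm_mobius_lt_one hb (hlt ζ hζ)
  have hs0 : s 0 ^ 2 = -b := by rw [hsq, Function.comp_apply, hf0, mobius_zero_right]
  refine ⟨s, hs.continuousOn, hs_maps, hsq, fun ζ hζ => ?_⟩
  have hfactor : f ζ = mobius (s 0) (s ζ) * mobius (-s 0) (s ζ) := by
    rw [← mobius_sq_sq, hs0, hsq, Function.comp_apply, mobius_neg_mobius hb (hlt ζ hζ)]
  rw [hfactor, norm_mul]
  gcongr
  exact norm_mobius_apply_zero_le_of_mapsTo_ball hs hs_maps hζ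

lemma sq_norm_le_of_forall_ne (hf : DifferentiableOn ℂ f (ball 0 1))
    (hmaps : MapsTo f (ball 0 1) (ball 0 1)) (hf0 : f 0 = 0) (hb : ‖b‖ < 1)
    (hfb : ∀ ζ ∈ ball 0 1, f ζ ≠ b) {ζ : ℂ} (hζ : ζ ∈ ball 0 1) :
    ‖f ζ‖ ^ 2 ≤ (1 - (1 - ‖b‖) * (1 - ‖mobius b (f ζ)‖ ^ 2) / 8) * ‖ζ‖ ^ 2 := by
  obtain ⟨s, -, hs_maps, hsq, hle⟩ := exists_sqrt_mobius_comp hf hmaps hf0 hb hfb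
  have hs0_lt : ‖s 0‖ < 1 := mem_ball_zero_iff.1 (hs_maps (mem_ball_self one_pos))
  have hs_lt : ‖s ζ‖ < 1 := mem_ball_zero_iff.1 (hs_maps hζ)
  have hs0 : (1 - ‖b‖) / 2 ≤ 1 - ‖s 0‖ := by
    have : ‖b‖ = ‖s 0‖ ^ 2 := by rw [← norm_pow, hsq, hf0, mobius_zero_right, norm_neg]
    nlinarith [sq_nonneg (1 - ‖s 0‖)]
  have hs : (1 - ‖mobius b (f ζ)‖ ^ 2) / 2 ≤ 1 - ‖s ζ‖ ^ 2 := by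
    rw [← hsq, norm_pow]
    nlinarith [sq_nonneg (1 - ‖s ζ‖ ^ 2)]
  have hfactor : (1 - ‖b‖) * (1 - ‖mobius b (f ζ)‖ ^ 2) / 8 ≤ 1 - ‖mobius (-s 0) (s ζ)‖ ^ 2 :=
    calc (1 - ‖b‖) * (1 - ‖mobius b (f ζ)‖ ^ 2) / 8
        = (1 - ‖b‖) / 2 / 2 * ((1 - ‖mobius b (f ζ)‖ ^ 2) / 2) := by ring
      _ ≤ (1 - ‖-s 0‖) / 2 * (1 - ‖s ζ‖ ^ 2) := by
        rw [norm_neg]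
        have := sub_pos.2 hs0_lt
        have := sub_pos.2 hb
        gcongr
        have := one_sub_sq_norm_pos (norm_mobius_lt_one hb (mem_ball_zero_iff.1 (hmaps hζ)))
        positivity
      _ ≤ 1 - ‖mobius (-s 0) (s ζ)‖ ^ 2 :=
        mul_one_sub_sq_norm_le_one_sub_sq_norm_mobius (by rwa [norm_neg]) hs_lt
  calc ‖f ζ‖ ^ 2 ≤ (‖ζ‖ * ‖mobius (-s 0) (s ζ)‖) ^ 2 := by gcongr; exact hle ζ hζ
    _ = ‖mobius (-s 0) (s ζ)‖ ^ 2 * ‖ζ‖ ^ 2 := by ring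
    _ ≤ _ := by gcongr; linarith

lemma norm_deriv_zero_le_two_mul_sqrt_of_forall_ne (hf : DifferentiableOn ℂ f (ball 0 1))
    (hmaps : MapsTo f (ball 0 1) (ball 0 1)) (hf0 : f 0 = 0) (hb : ‖b‖ < 1)
    (hfb : ∀ ζ ∈ ball 0 1, f ζ ≠ b) : ‖deriv f 0‖ ≤ 2 * √‖b‖ := by
  obtain ⟨s, hs, hs_maps, hsq, hle⟩ := exists_sqrt_mobius_comp hf hmaps hf0 hb hfb
  have hball : ball (0 : ℂ) 1 ∈ 𝓝 0 := ball_mem_nhds 0 one_pos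
  have hs0_lt : ‖s 0‖ < 1 := mem_ball_zero_iff.1 (hs_maps (mem_ball_self one_pos))
  have hs0 : ‖s 0‖ = √‖b‖ := by
    rw [← Real.sqrt_sq (norm_nonneg (s 0)), ← norm_pow, hsq, hf0, mobius_zero_right, norm_neg]
  have hlim : Tendsto (fun ζ => ‖mobius (-s 0) (s ζ)‖) (𝓝[≠] 0) (𝓝 ‖mobius (-s 0) (s 0)‖) :=
    (((hasDerivAt_mobius (by rwa [norm_neg]) hs0_lt).continuousAt.comp
      (hs.continuousAt hball)).norm.tendsto).mono_left nhdsWithin_le_nhds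
  have hderiv : ‖deriv f 0‖ ≤ ‖mobius (-s 0) (s 0)‖ := by
    refine le_of_tendsto_of_tendsto
      (hasDerivAt_iff_tendsto_slope.1 (hf.differentiableAt hball).hasDerivAt).norm hlim ?_
    filter_upwards [self_mem_nhdsWithin, nhdsWithin_le_nhds hball] with ζ hne hζ
    rw [slope_def_field, hf0, sub_zero, sub_zero, norm_div, div_le_iff₀' (norm_pos_iff.2 hne)]
    exact hle ζ hζ
  have hvalue : mobius (-s 0) (s 0) = 2 * s 0 / ((1 + ‖s 0‖ ^ 2 : ℝ) : ℂ) := by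
    push_cast
    rw [← Complex.conj_mul', mobius, map_neg]
    ring
  rw [hvalue, norm_div, Complex.norm_real, Real.norm_of_nonneg (by positivity), norm_mul,
    Complex.norm_ofNat, hs0] at hderiv
  exact hderiv.trans (div_le_self (by positivity) (le_add_of_nonneg_right (by positivity)))

end OmittedValue

section MaximumPrinciple

variable {E : Type*} [NormedAddCommGroup E] [NormedSpace ℂ E] {f : ℂ → E} {A : Set E} {R : ℝ}

lemma norm_dslope_zero_le_of_mem_frontier_ball_inter_preimage {ρ : ℝ}
    (hf : ContinuousOn f (closedBall 0 ρ)) (hf0 : f 0 = 0) (hA : IsOpen A) (h0A : 0 ∈ A)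
    (hAR : ∀ p ∈ closure A, ‖p‖ ≤ R)
    (hfr : ∀ ζ ∈ ball 0 ρ, f ζ ∈ frontier A → ‖f ζ‖ ≤ R * ‖ζ‖) (hρ : 0 < ρ) (hρ1 : ρ ≤ 1)
    {ζ : ℂ} (hζ : ζ ∈ frontier (ball 0 ρ ∩ f ⁻¹' A)) : ‖dslope f 0 ζ‖ ≤ R / ρ := by
  have hR : 0 ≤ R := (norm_nonneg 0).trans (hAR 0 (subset_closure h0A))
  have hUo : IsOpen (ball 0 ρ ∩ f ⁻¹' A) :=
    (hf.mono ball_subset_closedBall).isOpen_inter_preimage isOpen_ball hA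
  rw [hUo.frontier_eq] at hζ
  have hζρ : ζ ∈ closedBall 0 ρ :=
    closure_ball_subset_closedBall (closure_mono inter_subset_left hζ.1)
  have hne : ζ ≠ 0 := by
    rintro rfl
    exact hζ.2 ⟨mem_ball_self hρ, by rwa [mem_preimage, hf0]⟩
  have hfζ : f ζ ∈ closure A := ((hf ζ hζρ).mono (inter_subset_left.trans
    ball_subset_closedBall)).mem_closure hζ.1 fun _ hx => hx.2
  have hdslope : ‖dslope f 0 ζ‖ = ‖f ζ‖ / ‖ζ‖ := by
    rw [dslope_of_ne _ hne, slope_def_module, hf0, sub_zero, sub_zero, norm_smul, norm_inv,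
      inv_mul_eq_div]
  rw [hdslope]
  rcases (mem_closedBall_zero_iff.1 hζρ).lt_or_eq with hlt | heq
  · have hζU : ζ ∈ ball 0 ρ := mem_ball_zero_iff.2 hlt
    have hfr_mem : f ζ ∈ frontier A := by
      rw [hA.frontier_eq]; exact ⟨hfζ, fun hfA => hζ.2 ⟨hζU, hfA⟩⟩
    calc ‖f ζ‖ / ‖ζ‖ ≤ R := (div_le_iff₀ (norm_pos_iff.2 hne)).2 (hfr ζ hζU hfr_mem)
      _ ≤ R / ρ := le_div_self hR hρ hρ1
  · rw [heq]
    gcongr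
    exact hAR _ hfζ

lemma norm_deriv_zero_le_of_norm_le_mul_on_frontier [CompleteSpace E]
    (hf : DifferentiableOn ℂ f (ball 0 1)) (hf0 : f 0 = 0) (hA : IsOpen A) (h0A : 0 ∈ A)
    (hAR : ∀ p ∈ A, ‖p‖ ≤ R) (hfr : ∀ ζ ∈ ball 0 1, f ζ ∈ frontier A → ‖f ζ‖ ≤ R * ‖ζ‖) :
    ‖deriv f 0‖ ≤ R := by
  have hclosure : ∀ p ∈ closure A, ‖p‖ ≤ R := fun p hp => mem_closedBall_zero_iff.1 <|
    closure_minimal (fun p hp => mem_closedBall_zero_iff.2 (hAR p hp)) isClosed_closedBall hp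
  have hdslope : DifferentiableOn ℂ (dslope f 0) (ball 0 1) :=
    (Complex.differentiableOn_dslope (ball_mem_nhds 0 one_pos)).2 hf
  have hmax : ∀ ρ ∈ Ioo (0 : ℝ) 1, ‖deriv f 0‖ ≤ R / ρ := by
    intro ρ hρ
    have hsub : closedBall (0 : ℂ) ρ ⊆ ball 0 1 := closedBall_subset_ball hρ.2
    have hcl : closure (ball (0 : ℂ) ρ ∩ f ⁻¹' A) ⊆ closedBall 0 ρ :=
      (closure_mono inter_subset_left).trans closure_ball_subset_closedBall
    rw [← dslope_same]
    refine Complex.norm_le_of_forall_mem_frontier_norm_le (U := ball 0 ρ ∩ f ⁻¹' A)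
      (isBounded_ball.subset inter_subset_left) (hdslope.mono (hcl.trans hsub)).diffContOnCl
      (fun ζ => norm_dslope_zero_le_of_mem_frontier_ball_inter_preimage
        (hf.continuousOn.mono hsub) hf0 hA h0A hclosure
        (fun ξ hξ => hfr ξ (hsub (ball_subset_closedBall hξ))) hρ.1 hρ.2.le)
      (subset_closure ⟨mem_ball_self hρ.1, by rwa [mem_preimage, hf0]⟩)
  have hlim : Tendsto (fun ρ : ℝ => R / ρ) (𝓝[<] 1) (𝓝 (R / 1)) :=
    (tendsto_const_nhds.div tendsto_id one_ne_zero).mono_left nhdsWithin_le_nhds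
  rw [← div_one R]
  exact ge_of_tendsto hlim (eventually_of_mem (Ioo_mem_nhdsLT one_pos) hmax)

end MaximumPrinciple

/-- The points around which the closed curve `Γ` on `[a, b]` has nonzero winding number, encoded
by a continuous logarithm of `Γ - p` which does not close up. -/
def windingSet (Γ : ℝ → ℂ) (a b : ℝ) : Set ℂ :=
  {p | ∃ w : ℝ → ℂ, ContinuousOn w (Icc a b) ∧ (∀ t ∈ Icc a b, Complex.exp (w t) = Γ t - p) ∧
    w b ≠ w a}

section Winding

variable {Γ : ℝ → ℂ} {a b : ℝ} {p q : ℂ}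

lemma disjoint_windingSet_image : Disjoint (windingSet Γ a b) (Γ '' Icc a b) := by
  rw [Set.disjoint_right]
  rintro _ ⟨t, ht, rfl⟩ ⟨w, -, hexp, -⟩
  exact Complex.exp_ne_zero (w t) ((hexp t ht).trans (sub_self _))

lemma mem_windingSet_of_forall_norm_sub_lt (hΓ : ContinuousOn Γ (Icc a b)) (hclosed : Γ b = Γ a)
    (hp : p ∈ windingSet Γ a b) (hpq : ∀ t ∈ Icc a b, ‖q - p‖ < ‖Γ t - p‖) :
    q ∈ windingSet Γ a b := by
  obtain ⟨w, hw, hexp, hne⟩ := hp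
  have hΓp : ∀ t ∈ Icc a b, Γ t - p ≠ 0 := fun t ht =>
    norm_pos_iff.1 ((norm_nonneg _).trans_lt (hpq t ht))
  have hslit : ∀ t ∈ Icc a b, 1 + (p - q) / (Γ t - p) ∈ slitPlane := fun t ht =>
    mem_slitPlane_of_norm_lt_one <| by
      rw [norm_div, div_lt_one (norm_pos_iff.2 (hΓp t ht)), norm_sub_rev]
      exact hpq t ht
  refine ⟨fun t => w t + Complex.log (1 + (p - q) / (Γ t - p)), ?_, fun t ht => ?_, ?_⟩
  · exact hw.add ((continuousOn_const.add
      (continuousOn_const.div (hΓ.sub continuousOn_const) hΓp)).clog hslit)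
  · have := hΓp t ht
    rw [Complex.exp_add, hexp t ht, Complex.exp_log (slitPlane_ne_zero (hslit t ht))]
    field_simp
    ring
  · simp only [hclosed]
    exact fun h => hne (add_right_cancel h)

lemma exists_pos_forall_le_norm_sub (hΓ : ContinuousOn Γ (Icc a b)) (hp : p ∉ Γ '' Icc a b) :
    ∃ δ > 0, ∀ t ∈ Icc a b, δ ≤ ‖Γ t - p‖ := by
  obtain ⟨δ, hδ, hball⟩ := Metric.isOpen_iff.1
    (isCompact_Icc.image_of_continuousOn hΓ).isClosed.isOpen_compl p hp
  refine ⟨δ, hδ, fun t ht => not_lt.1 fun hlt => ?_⟩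
  exact hball (mem_ball_iff_norm.2 hlt) ⟨t, ht, rfl⟩

lemma isOpen_windingSet (hΓ : ContinuousOn Γ (Icc a b)) (hclosed : Γ b = Γ a) :
    IsOpen (windingSet Γ a b) := by
  refine Metric.isOpen_iff.2 fun p hp => ?_
  obtain ⟨δ, hδ, hfar⟩ :=
    exists_pos_forall_le_norm_sub hΓ (disjoint_left.1 disjoint_windingSet_image hp)
  exact ⟨δ, hδ, fun q hq => mem_windingSet_of_forall_norm_sub_lt hΓ hclosed hp fun t ht =>
    (mem_ball_iff_norm.1 hq).trans_le (hfar t ht)⟩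

lemma frontier_windingSet_subset (hΓ : ContinuousOn Γ (Icc a b)) (hclosed : Γ b = Γ a) :
    frontier (windingSet Γ a b) ⊆ Γ '' Icc a b := by
  rw [(isOpen_windingSet hΓ hclosed).frontier_eq]
  rintro p ⟨hcl, hp⟩
  by_contra himage
  obtain ⟨δ, hδ, hfar⟩ := exists_pos_forall_le_norm_sub hΓ himage
  obtain ⟨q, hq, hdist⟩ := Metric.mem_closure_iff.1 hcl (δ / 2) (half_pos hδ)
  rw [dist_eq_norm] at hdist
  refine hp (mem_windingSet_of_forall_norm_sub_lt hΓ hclosed hq fun t ht => ?_)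
  have htriangle : ‖Γ t - p‖ ≤ ‖Γ t - q‖ + ‖q - p‖ := norm_sub_le_norm_sub_add_norm_sub _ _ _
  rw [norm_sub_rev q p] at htriangle
  linarith [hfar t ht]

lemma norm_le_of_mem_windingSet (hab : a ≤ b) (hΓ : ContinuousOn Γ (Icc a b))
    (hclosed : Γ b = Γ a) {M : ℝ} (hM : ∀ t ∈ Icc a b, ‖Γ t‖ ≤ M) (hp : p ∈ windingSet Γ a b) :
    ‖p‖ ≤ M := by
  by_contra! hlt
  obtain ⟨w, hw, hexp, hne⟩ := hp
  have hp_pos : 0 < ‖p‖ := (norm_nonneg _).trans_lt ((hM a (left_mem_Icc.2 hab)).trans_lt hlt)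
  have hp0 : p ≠ 0 := norm_pos_iff.1 hp_pos
  have hslit : ∀ t ∈ Icc a b, 1 + -Γ t / p ∈ slitPlane := fun t ht =>
    mem_slitPlane_of_norm_lt_one <| by
      rw [norm_div, norm_neg, div_lt_one hp_pos]
      exact (hM t ht).trans_lt hlt
  have hcont : ContinuousOn (fun t => w t - Complex.log (1 + -Γ t / p)) (Icc a b) :=
    hw.sub ((continuousOn_const.add (hΓ.neg.div_const p)).clog hslit)
  have hconst : ∀ t ∈ Icc a b, Complex.exp (w t - Complex.log (1 + -Γ t / p)) = -p := by
    intro t ht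
    have hne_zero := slitPlane_ne_zero (hslit t ht)
    rw [Complex.exp_sub, hexp t ht, Complex.exp_log hne_zero, div_eq_iff hne_zero]
    field_simp
    ring
  have heq := Complex.isCoveringMap_exp.constOn_of_comp isPreconnected_Icc hcont
    (fun t ht t' ht' => Subtype.ext ((hconst t ht).trans (hconst t' ht').symm))
    (right_mem_Icc.2 hab) (left_mem_Icc.2 hab)
  simp only [hclosed] at heq
  exact hne (sub_left_injective heq)

end Winding

section HyperbolicLength

variable {γ : ℝ → ℂ}

lemma differentiableAt_of_contDiffOn_Icc {a b t : ℝ} (hγ : ContDiffOn ℝ 1 γ (Icc a b))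
    (ht : t ∈ Ioo a b) : DifferentiableAt ℝ γ t :=
  (hγ.contDiffAt (Icc_mem_nhds ht.1 ht.2)).differentiableAt one_ne_zero

lemma hypLength_mobius_comp {a : ℂ} (ha : ‖a‖ < 1)
    (hγ : ∀ t ∈ Ioo (0 : ℝ) 1, DifferentiableAt ℝ γ t) (hmaps : MapsTo γ (Ioo 0 1) (ball 0 1)) :
    hypLength (mobius a ∘ γ) = hypLength γ := by
  refine intervalIntegral.integral_congr_Ioo_of_le zero_le_one fun t ht => ?_
  have hγt : ‖γ t‖ < 1 := mem_ball_zero_iff.1 (hmaps ht)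
  have hden := norm_pos_iff.2 (one_sub_conj_mul_ne_zero ha hγt)
  have ha2 := one_sub_sq_norm_pos ha
  have hderiv : deriv (mobius a ∘ γ) t =
      ((1 - ‖a‖ ^ 2 : ℝ) : ℂ) / (1 - conj a * γ t) ^ 2 * deriv γ t :=
    ((hasDerivAt_mobius ha hγt).comp t (hγ t ht).hasDerivAt).deriv
  rw [hderiv, Function.comp_apply, one_sub_sq_norm_mobius ha hγt, norm_mul, norm_div, norm_pow,
    Complex.norm_real, Real.norm_of_nonneg ha2.le]
  field_simp

lemma integrableOn_hypLength (hγ : ContDiffOn ℝ 1 γ (Icc 0 1))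
    (hmaps : MapsTo γ (Icc 0 1) (ball 0 1)) :
    MeasureTheory.IntegrableOn (fun t => 2 * ‖deriv γ t‖ / (1 - ‖γ t‖ ^ 2)) (Icc 0 1) := by
  have hcont : ContinuousOn (fun t => 2 * ‖derivWithin γ (Icc 0 1) t‖ / (1 - ‖γ t‖ ^ 2))
      (Icc 0 1) :=
    (continuousOn_const.mul
      (hγ.continuousOn_derivWithin (uniqueDiffOn_Icc zero_lt_one) le_rfl).norm).div
      (continuousOn_const.sub (hγ.continuousOn.norm.pow 2))
      fun t ht => (one_sub_sq_norm_pos (mem_ball_zero_iff.1 (hmaps ht))).ne'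
  have hint := hcont.integrableOn_Icc (μ := MeasureTheory.volume)
  rw [integrableOn_Icc_iff_integrableOn_Ioo] at hint ⊢
  refine hint.congr_fun (fun t ht => ?_) measurableSet_Ioo
  simp only [derivWithin_of_mem_nhds (Icc_mem_nhds ht.1 ht.2)]

lemma exp_neg_hypLength_le_one_sub_sq_norm (hγ : ContDiffOn ℝ 1 γ (Icc 0 1))
    (hmaps : MapsTo γ (Icc 0 1) (ball 0 1)) (hγ0 : γ 0 = 0) {t : ℝ} (ht : t ∈ Icc (0 : ℝ) 1) :
    Real.exp (-hypLength γ) ≤ 1 - ‖γ t‖ ^ 2 := by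
  have hpos : ∀ x ∈ Icc (0 : ℝ) 1, 0 < 1 - ‖γ x‖ ^ 2 := fun x hx =>
    one_sub_sq_norm_pos (mem_ball_zero_iff.1 (hmaps hx))
  have hint := integrableOn_hypLength hγ hmaps
  have hsub : Icc 0 t ⊆ Icc 0 1 := Icc_subset_Icc le_rfl ht.2
  have hlog_le : -Real.log (1 - ‖γ t‖ ^ 2) - -Real.log (1 - ‖γ 0‖ ^ 2) ≤
      ∫ x in (0 : ℝ)..t, 2 * ‖deriv γ x‖ / (1 - ‖γ x‖ ^ 2) := by
    refine intervalIntegral.sub_le_integral_of_hasDeriv_right_of_le ht.1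
      (g' := fun x => -(-(2 * inner ℝ (γ x) (deriv γ x)) / (1 - ‖γ x‖ ^ 2)))
      ((continuousOn_const.sub ((hγ.continuousOn.mono hsub).norm.pow 2)).log
        fun x hx => (hpos x (hsub hx)).ne').neg (fun x hx => ?_) (hint.mono_set hsub)
      fun x hx => ?_
    · have hderiv := (differentiableAt_of_contDiffOn_Icc hγ
        (Ioo_subset_Ioo_right ht.2 hx)).hasDerivAt
      exact ((hderiv.norm_sq.const_sub 1).log
        (hpos x (hsub (Ioo_subset_Icc_self hx))).ne').neg.hasDerivWithinAt
    · have hx' := hsub (Ioo_subset_Icc_self hx)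
      have hinner : inner ℝ (γ x) (deriv γ x) ≤ ‖deriv γ x‖ :=
        (real_inner_le_norm _ _).trans
          (mul_le_of_le_one_left (norm_nonneg _) (mem_ball_zero_iff.1 (hmaps hx')).le)
      rw [neg_div, neg_neg]
      have := hpos x hx'
      gcongr
  have hmono : ∫ x in (0 : ℝ)..t, 2 * ‖deriv γ x‖ / (1 - ‖γ x‖ ^ 2) ≤ hypLength γ :=
    intervalIntegral.integral_mono_interval le_rfl ht.1 ht.2
      ((MeasureTheory.ae_restrict_iff' measurableSet_Ioc).2 <| .of_forall fun x hx =>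
        div_nonneg (by positivity) (hpos x (Ioc_subset_Icc_self hx)).le)
      ((intervalIntegrable_iff_integrableOn_Icc_of_le zero_le_one).2 hint)
  rw [hγ0, norm_zero, zero_pow two_ne_zero, sub_zero, Real.log_one, neg_zero, sub_zero] at hlog_le
  rw [← Real.le_log_iff_exp_le (hpos t ht)]
  linarith

lemma exp_neg_hypLength_le_one_sub_sq_norm_mobius (hγ : ContDiffOn ℝ 1 γ (Icc 0 1))
    (hmaps : MapsTo γ (Icc 0 1) (ball 0 1)) {t : ℝ} (ht : t ∈ Icc (0 : ℝ) 1) :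
    Real.exp (-hypLength γ) ≤ 1 - ‖mobius (γ 0) (γ t)‖ ^ 2 := by
  have hγ0 : ‖γ 0‖ < 1 := mem_ball_zero_iff.1 (hmaps ⟨le_rfl, zero_le_one⟩)
  have hmobius : ContDiffOn ℝ 1 (mobius (γ 0)) (ball 0 1) :=
    ((differentiableOn_mobius hγ0).contDiffOn isOpen_ball).restrict_scalars ℝ
  rw [← hypLength_mobius_comp hγ0 (fun x hx => differentiableAt_of_contDiffOn_Icc hγ hx)
    (hmaps.mono_left Ioo_subset_Icc_self)]
  exact exp_neg_hypLength_le_one_sub_sq_norm (hmobius.comp hγ hmaps)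
    ((mapsTo_mobius_ball hγ0).comp hmaps) (mobius_self _) ht

end HyperbolicLength

lemma sq_norm_deriv_zero_le_of_mem_windingSet {f : ℂ → ℂ}
    (hf : DifferentiableOn ℂ f (ball 0 1)) (hmaps : MapsTo f (ball 0 1) (ball 0 1)) (hf0 : f 0 = 0)
    {Γ : ℝ → ℂ} {a b : ℝ} (hab : a ≤ b) (hΓ : ContinuousOn Γ (Icc a b)) (hclosed : Γ b = Γ a)
    (hΓ_maps : MapsTo Γ (Icc a b) (ball 0 1)) (h0 : 0 ∈ windingSet Γ a b) {m ε : ℝ} (hm : m < 1)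
    (hε : 0 ≤ ε)
    (hnear : ∀ t ∈ Icc a b, ∃ c, ‖c‖ ≤ m ∧ (∀ ζ ∈ ball 0 1, f ζ ≠ c) ∧
      ε ≤ 1 - ‖mobius c (Γ t)‖ ^ 2) :
    ‖deriv f 0‖ ^ 2 ≤ 1 - (1 - m) * ε / 8 := by
  have hmε : 0 ≤ (1 - m) * ε := mul_nonneg (sub_nonneg.2 hm.le) hε
  have hloss : ∀ c : ℂ, ‖c‖ ≤ m → ∀ x, ε ≤ x → (1 - m) * ε ≤ (1 - ‖c‖) * x := fun c hc x hx =>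
    mul_le_mul (sub_le_sub_left hc 1) hx hε (sub_nonneg.2 (hc.trans hm.le))
  have hΓ_sq : ∀ t ∈ Icc a b, ‖Γ t‖ ^ 2 ≤ 1 - (1 - m) * ε / 8 := by
    intro t ht
    obtain ⟨c, hc, -, hεc⟩ := hnear t ht
    have hc1 : ‖c‖ < 1 := hc.trans_lt hm
    have hΓt := mem_ball_zero_iff.1 (hΓ_maps ht)
    have hback := mul_one_sub_sq_norm_le_one_sub_sq_norm_mobius (a := -c)
      (by rwa [norm_neg]) (norm_mobius_lt_one hc1 hΓt)
    rw [mobius_neg_mobius hc1 hΓt, norm_neg] at hback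
    linarith [hloss c hc _ hεc]
  obtain ⟨t₀, ht₀⟩ : (Icc a b).Nonempty := nonempty_Icc.2 hab
  have hR : 0 ≤ 1 - (1 - m) * ε / 8 := (sq_nonneg _).trans (hΓ_sq t₀ ht₀)
  refine (Real.le_sqrt (norm_nonneg _) hR).1 <|
    norm_deriv_zero_le_of_norm_le_mul_on_frontier hf hf0 (isOpen_windingSet hΓ hclosed) h0
      (fun p => norm_le_of_mem_windingSet hab hΓ hclosed fun t ht =>
        Real.le_sqrt_of_sq_le (hΓ_sq t ht))
      fun ζ hζ hfr => ?_
  obtain ⟨t, ht, hΓt⟩ := frontier_windingSet_subset hΓ hclosed hfr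
  obtain ⟨c, hc, hfc, hεc⟩ := hnear t ht
  rw [← Real.sqrt_sq (norm_nonneg ζ), ← Real.sqrt_mul hR]
  refine Real.le_sqrt_of_sq_le
    ((sq_norm_le_of_forall_ne hf hmaps hf0 (hc.trans_lt hm) hfc hζ).trans ?_)
  rw [← hΓt]
  exact mul_le_mul_of_nonneg_right (by linarith [hloss c hc _ hεc]) (sq_nonneg _)

section LocalHomeomorph

variable {f : ℂ → ℂ} {c : ℂ}

lemma eventually_deriv_ne_zero_of_injOn {U : Set ℂ} (hU : U ∈ 𝓝 c)
    (hf : DifferentiableOn ℂ f U) (hinj : InjOn f U) : ∀ᶠ z in 𝓝[≠] c, deriv f z ≠ 0 := by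
  refine (hf.analyticAt hU).deriv.eventually_eq_zero_or_eventually_ne_zero.resolve_left fun h => ?_
  obtain ⟨r, hr, hball⟩ := Metric.eventually_nhds_iff_ball.1 (h.and (eventually_mem_nhds_iff.2 hU))
  have hconst : ∀ z ∈ ball c r, f z = f c := fun z hz =>
    isOpen_ball.is_const_of_deriv_eq_zero (convex_ball c r).isPreconnected
      (fun x hx => (hf.differentiableAt (hball x hx).2).differentiableWithinAt)
      (fun x hx => (hball x hx).1) hz (mem_ball_self hr)
  have hmem : ∀ᶠ z in 𝓝[≠] c, z ∈ ball c r := nhdsWithin_le_nhds (ball_mem_nhds c hr)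
  obtain ⟨z, hz, hzc⟩ := (hmem.and eventually_mem_nhdsWithin).exists
  exact hzc (hinj (mem_of_mem_nhds (hball z hz).2) (mem_of_mem_nhds hU) (hconst z hz))

-- The inverse is continuous, and holomorphic off the isolated critical values, so the removable
-- singularity theorem makes it holomorphic everywhere.
lemma deriv_ne_zero_of_mem_source (e : OpenPartialHomeomorph ℂ ℂ)
    (he : DifferentiableOn ℂ e e.source) (hc : c ∈ e.source) : deriv e c ≠ 0 := by
  have hinv : e.symm (e c) = c := e.left_inv hc
  have hsource : e.source ∈ 𝓝 c := e.open_source.mem_nhds hc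
  have htarget : e.target ∈ 𝓝 (e c) := e.open_target.mem_nhds (e.map_source hc)
  have hcont : ContinuousAt e.symm (e c) := e.continuousAt_symm (e.map_source hc)
  have hpunct : Tendsto e.symm (𝓝[≠] (e c)) (𝓝[≠] c) := by
    refine tendsto_nhdsWithin_iff.2 ⟨?_, ?_⟩
    · simpa only [hinv] using hcont.tendsto.mono_left nhdsWithin_le_nhds
    · filter_upwards [nhdsWithin_le_nhds htarget, self_mem_nhdsWithin] with y hy hyc heq
      exact hyc (by rw [mem_singleton_iff, ← heq, e.right_inv hy])
  have hcrit : ∀ᶠ y in 𝓝[≠] (e c), deriv e (e.symm y) ≠ 0 :=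
    hpunct.eventually (eventually_deriv_ne_zero_of_injOn hsource he e.injOn)
  have hdiff : ∀ᶠ y in 𝓝[≠] (e c), DifferentiableAt ℂ e.symm y := by
    filter_upwards [nhdsWithin_le_nhds htarget, hcrit] with y hy hne
    exact (e.hasDerivAt_symm hy hne (he.differentiableAt
      (e.open_source.mem_nhds (e.map_target hy))).hasDerivAt).differentiableAt
  have hsymm : DifferentiableAt ℂ e.symm (e c) :=
    (analyticAt_of_differentiable_on_punctured_nhds_of_continuousAt hdiff hcont).differentiableAt
  have hcomp : HasDerivAt id (deriv e.symm (e c) * deriv e c) c :=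
    (hsymm.hasDerivAt.comp c (he.differentiableAt hsource).hasDerivAt).congr_of_eventuallyEq
      ((e.eventually_left_inverse hc).mono fun _ h => h.symm)
  exact right_ne_zero_of_mul_eq_one (hcomp.unique (hasDerivAt_id c))

lemma deriv_ne_zero_of_isLocalHomeomorphOn {U : Set ℂ} (hU : IsOpen U)
    (hf : DifferentiableOn ℂ f U) (hloc : IsLocalHomeomorphOn f U) (hc : c ∈ U) :
    deriv f c ≠ 0 := by
  obtain ⟨e, hce, rfl⟩ := hloc c hc
  exact deriv_ne_zero_of_mem_source (e.restrOpen U hU) (hf.mono inter_subset_right) ⟨hce, hc⟩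

end LocalHomeomorph

section Covering

lemma isCoveringMap_of_isCoveringMapOld {E X : Type*} [TopologicalSpace E] [TopologicalSpace X]
    {f : E → X} (hf : IsCoveringMapOld f) : IsCoveringMap f := by
  intro x
  obtain ⟨_, t, ht⟩ := hf x
  exact (IsEvenlyCovered.of_trivialization ht).to_isEvenlyCovered_preimage

variable {φ : ℂ → ℂ} {U : Set ℂ}

lemma isLocalHomeomorphOn_of_isHoloCover (hU : IsOpen U) (hφ : IsHoloCover φ U) :
    IsLocalHomeomorphOn φ (ball 0 1) := by
  obtain ⟨-, hmaps, hcover⟩ := hφ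
  have hval : IsLocalHomeomorphOn ((↑) : ball (0 : ℂ) 1 → ℂ) univ :=
    isOpen_ball.isOpenEmbedding_subtypeVal.isLocalHomeomorph.isLocalHomeomorphOn
  have hcomp : IsLocalHomeomorphOn (φ ∘ ((↑) : ball (0 : ℂ) 1 → ℂ)) univ :=
    (hU.isOpenEmbedding_subtypeVal.isLocalHomeomorph.comp
      (isCoveringMap_of_isCoveringMapOld hcover).isLocalHomeomorph).isLocalHomeomorphOn
  simpa only [image_univ, Subtype.range_coe] using hcomp.of_comp_right hval

lemma deriv_ne_zero_of_isHoloCover (hU : IsOpen U) (hφ : IsHoloCover φ U) {c : ℂ}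
    (hc : c ∈ ball 0 1) : deriv φ c ≠ 0 :=
  deriv_ne_zero_of_isLocalHomeomorphOn isOpen_ball hφ.1
    (isLocalHomeomorphOn_of_isHoloCover hU hφ) hc

end Covering

section LogBounds

variable {m : ℝ}

lemma log_le_log_div_four_of_le_two_mul_sqrt {x : ℝ} (hx : 0 < x) (hm : 0 < m)
    (hm16 : m ≤ 1 / 16) (h : x ≤ 2 * √m) : Real.log x ≤ Real.log m / 4 := by
  have hx_log : Real.log x ≤ Real.log 2 + Real.log m / 2 := by
    rw [← Real.log_sqrt hm.le, ← Real.log_mul two_ne_zero (Real.sqrt_ne_zero'.2 hm)]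
    exact Real.log_le_log hx h
  have hm_log : Real.log m ≤ -(4 * Real.log 2) := by
    refine (Real.log_le_log hm hm16).trans_eq ?_
    rw [show (1 / 16 : ℝ) = (2 ^ 4)⁻¹ by norm_num, Real.log_inv, Real.log_pow, Nat.cast_ofNat]
  linarith

lemma log_le_mul_log_of_sq_le {x ε : ℝ} (hx : 0 < x) (hm16 : 1 / 16 ≤ m) (hm : m ≤ 1)
    (hε : 0 ≤ ε) (h : x ^ 2 ≤ 1 - (1 - m) * ε / 8) : Real.log x ≤ ε / 256 * Real.log m := by
  have hx_log : 2 * Real.log x ≤ -((1 - m) * ε / 8) := by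
    have hsq := Real.log_le_sub_one_of_pos (pow_pos hx 2)
    rw [Real.log_pow, Nat.cast_ofNat] at hsq
    linarith
  have hm0 : 0 < m := by linarith
  have hm_log : -(16 * (1 - m)) ≤ Real.log m := by
    have hinv : m⁻¹ ≤ 16 := inv_le_of_inv_le₀ (by norm_num) (by linarith)
    calc -(16 * (1 - m)) ≤ -(m⁻¹ * (1 - m)) :=
          neg_le_neg (mul_le_mul_of_nonneg_right hinv (sub_nonneg.2 hm))
      _ = 1 - m⁻¹ := by rw [mul_sub, inv_mul_cancel₀ hm0.ne']; ring
      _ ≤ Real.log m := Real.one_sub_inv_le_log_of_pos hm0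
  linarith [mul_le_mul_of_nonneg_left hm_log (div_nonneg hε (by norm_num : (0 : ℝ) ≤ 256))]

lemma log_le_log_div_mul_exp {x d : ℝ} (hd : 0 ≤ d) (hx : 0 < x) (hm0 : 0 < m) (hm1 : m ≤ 1)
    (hsqrt : x ≤ 2 * √m) (hsq : x ^ 2 ≤ 1 - (1 - m) * Real.exp (-d) / 8) :
    Real.log x ≤ Real.log m / (256 * Real.exp d) := by
  rcases le_total m (1 / 16) with hm16 | hm16
  · have hK : 4 ≤ 256 * Real.exp d := by linarith [Real.one_le_exp hd]
    refine (log_le_log_div_four_of_le_two_mul_sqrt hx hm0 hm16 hsqrt).trans ?_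
    have h := div_le_div_of_nonneg_left (neg_nonneg.2 (Real.log_nonpos hm0.le hm1)) four_pos hK
    rwa [neg_div, neg_div, neg_le_neg_iff] at h
  · refine (log_le_mul_log_of_sq_le hx hm16 hm1 (Real.exp_pos _).le hsq).trans_eq ?_
    rw [Real.exp_neg]
    field_simp

end LogBounds

section Chain

variable {n : ℕ} {z : ℕ → ℂ} {γ : ℕ → ℝ → ℂ} {w : ℝ → ℂ} {d t : ℝ}

lemma norm_lt_one_and_exp_neg_le_of_chain
    (hγ : ∀ i < n, ContDiffOn ℝ 1 (γ i) (Icc 0 1) ∧ MapsTo (γ i) (Icc 0 1) (ball 0 1) ∧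
      γ i 0 = z i ∧ hypLength (γ i) ≤ d)
    (ht : t ∈ Ico (0 : ℝ) n) :
    ‖γ ⌊t⌋₊ (t - ⌊t⌋₊)‖ < 1 ∧
      ∃ i < n, Real.exp (-d) ≤ 1 - ‖mobius (z i) (γ ⌊t⌋₊ (t - ⌊t⌋₊))‖ ^ 2 := by
  have hi : ⌊t⌋₊ < n := (Nat.floor_lt ht.1).2 ht.2
  have hfract : t - ⌊t⌋₊ ∈ Icc (0 : ℝ) 1 :=
    ⟨sub_nonneg.2 (Nat.floor_le ht.1), by linarith [Nat.lt_floor_add_one t]⟩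
  obtain ⟨hsmooth, hmaps, hstart, hlength⟩ := hγ _ hi
  refine ⟨mem_ball_zero_iff.1 (hmaps hfract), _, hi, ?_⟩
  rw [← hstart]
  exact (Real.exp_le_exp.2 (neg_le_neg hlength)).trans
    (exp_neg_hypLength_le_one_sub_sq_norm_mobius hsmooth hmaps hfract)

lemma exp_lift_end_eq_exp_lift_zero (hn : 0 < n) (hz : z n = z 0) (hγ : γ 0 0 = z 0)
    (hexp : ∀ t ∈ Ico (0 : ℝ) n, Complex.exp (w t) = γ ⌊t⌋₊ (t - ⌊t⌋₊))
    (hexp_end : Complex.exp (w n) = z n) : Complex.exp (w n) = Complex.exp (w 0) := by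
  rw [hexp_end, hz, hexp 0 ⟨le_rfl, Nat.cast_pos.2 hn⟩, Nat.floor_zero, Nat.cast_zero, sub_zero, hγ]

lemma norm_exp_lift_lt_one_and_exp_neg_le (hn : 0 < n) (hz : z n = z 0)
    (hγ : ∀ i < n, ContDiffOn ℝ 1 (γ i) (Icc 0 1) ∧ MapsTo (γ i) (Icc 0 1) (ball 0 1) ∧
      γ i 0 = z i ∧ hypLength (γ i) ≤ d)
    (hexp : ∀ t ∈ Ico (0 : ℝ) n, Complex.exp (w t) = γ ⌊t⌋₊ (t - ⌊t⌋₊))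
    (hexp_end : Complex.exp (w n) = z n) (ht : t ∈ Icc (0 : ℝ) n) :
    ‖Complex.exp (w t)‖ < 1 ∧
      ∃ i < n, Real.exp (-d) ≤ 1 - ‖mobius (z i) (Complex.exp (w t))‖ ^ 2 := by
  have hinit : ∀ s ∈ Ico (0 : ℝ) n, ‖Complex.exp (w s)‖ < 1 ∧
      ∃ i < n, Real.exp (-d) ≤ 1 - ‖mobius (z i) (Complex.exp (w s))‖ ^ 2 := fun s hs => by
    rw [hexp s hs]
    exact norm_lt_one_and_exp_neg_le_of_chain hγ hs
  rcases ht.2.lt_or_eq with htn | rfl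
  · exact hinit t ⟨ht.1, htn⟩
  · rw [exp_lift_end_eq_exp_lift_zero hn hz (hγ 0 hn).2.2.1 hexp hexp_end]
    exact hinit 0 ⟨le_rfl, Nat.cast_pos.2 hn⟩

end Chain

theorem stmt12_general {d : ℝ} (hd : 0 ≤ d) {n : ℕ} (hn : 1 ≤ n) {z : ℕ → ℂ} (hz : z n = z 0)
    {γ : ℕ → ℝ → ℂ}
    (hγ : ∀ i < n, ContDiffOn ℝ 1 (γ i) (Icc 0 1) ∧ MapsTo (γ i) (Icc 0 1) (ball 0 1) ∧
      γ i 0 = z i ∧ hypLength (γ i) ≤ d)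
    {w : ℝ → ℂ} (hw : ContinuousOn w (Icc 0 n))
    (hexp : ∀ t ∈ Ico (0 : ℝ) n, Complex.exp (w t) = γ ⌊t⌋₊ (t - ⌊t⌋₊))
    (hexp_end : Complex.exp (w n) = z n) (hturn : w n ≠ w 0)
    {φ : ℂ → ℂ} (hφ : DifferentiableOn ℂ φ (ball 0 1))
    (hmaps : MapsTo φ (ball 0 1) (ball 0 1 \ {x | ∃ i < n, z i = x})) (hφ0 : φ 0 = 0)
    (hderiv : deriv φ 0 ≠ 0) :
    Real.log ‖deriv φ 0‖ ≤ Real.log ((Finset.range n).sup'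
        (Finset.nonempty_range_iff.mpr (Nat.one_le_iff_ne_zero.mp hn)) fun i => ‖z i‖) /
          (256 * Real.exp d) ∧
      Real.log ((Finset.range n).sup'
        (Finset.nonempty_range_iff.mpr (Nat.one_le_iff_ne_zero.mp hn)) fun i => ‖z i‖) /
          (256 * Real.exp d) < 0 := by
  set m := (Finset.range n).sup' _ fun i => ‖z i‖
  have hz_lt : ∀ i < n, ‖z i‖ < 1 := fun i hi => by
    rw [← (hγ i hi).2.2.1]
    exact mem_ball_zero_iff.1 ((hγ i hi).2.1 (left_mem_Icc.2 zero_le_one))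
  have hz_le : ∀ i < n, ‖z i‖ ≤ m := fun i hi =>
    Finset.le_sup' (fun i => ‖z i‖) (Finset.mem_range.2 hi)
  have hz0 : z 0 ≠ 0 := hz ▸ hexp_end ▸ Complex.exp_ne_zero _
  have hm0 : 0 < m := (norm_pos_iff.2 hz0).trans_le (hz_le 0 hn)
  have hm1 : m < 1 := (Finset.sup'_lt_iff _).2 fun i hi => hz_lt i (Finset.mem_range.1 hi)
  have hφ_ball : MapsTo φ (ball 0 1) (ball 0 1) := hmaps.mono_right sdiff_subset
  have homit : ∀ i < n, ∀ ζ ∈ ball 0 1, φ ζ ≠ z i := fun i hi ζ hζ h => (hmaps hζ).2 ⟨i, hi, h.symm⟩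
  have hsqrt : ‖deriv φ 0‖ ≤ 2 * √m :=
    (norm_deriv_zero_le_two_mul_sqrt_of_forall_ne hφ hφ_ball hφ0 (hz_lt 0 hn) (homit 0 hn)).trans
      (mul_le_mul_of_nonneg_left (Real.sqrt_le_sqrt (hz_le 0 hn)) zero_le_two)
  have hsq : ‖deriv φ 0‖ ^ 2 ≤ 1 - (1 - m) * Real.exp (-d) / 8 := by
    have hnear {t : ℝ} := norm_exp_lift_lt_one_and_exp_neg_le (t := t) hn hz hγ hexp hexp_end
    refine sq_norm_deriv_zero_le_of_mem_windingSet hφ hφ_ball hφ0 n.cast_nonneg hw.cexp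
      (exp_lift_end_eq_exp_lift_zero hn hz (hγ 0 hn).2.2.1 hexp hexp_end)
      (fun t ht => mem_ball_zero_iff.2 (hnear ht).1)
      ⟨w, hw, fun t _ => (sub_zero _).symm, hturn⟩ hm1 (Real.exp_pos _).le fun t ht => ?_
    obtain ⟨-, i, hi, hle⟩ := hnear ht
    exact ⟨z i, hz_le i hi, homit i hi, hle⟩
  exact ⟨log_le_log_div_mul_exp hd (norm_pos_iff.2 hderiv) hm0 hm1.le hsqrt hsq,
    div_neg_of_neg_of_pos (Real.log_neg hm0 hm1) (by positivity)⟩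

/-- For every `d > 0` there is `K(d) > 1` such that: for any cyclic chain
`z₀, …, z_n = z₀` of points of `𝔻 \ {0}` joined by `C¹` paths `γᵢ` in
`𝔻 \ {0}` of hyperbolic length `≤ d`, whose concatenation admits a continuous
`exp`-lift `w` on `[0, n]` with `|Im w(n) - Im w(0)| ≥ 2π` (at least one turn
around `0`), every holomorphic covering map `φ : 𝔻 → 𝔻 \ {z₀, …, z_{n-1}}`
with `φ 0 = 0` satisfies `ln|φ'(0)| ≤ ln(maxᵢ |zᵢ|)/K(d) < 0`. -/
theorem stmt12 : ∀ d > (0 : ℝ), ∃ K > (1 : ℝ), ∀ (n : ℕ) (hn : 1 ≤ n),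
    ∀ z : ℕ → ℂ, z n = z 0 →
    (∀ i ≤ n, z i ∈ Metric.ball (0 : ℂ) 1 \ {0}) →
    ∀ γ : ℕ → ℝ → ℂ,
    (∀ i < n, ContDiffOn ℝ 1 (γ i) (Set.Icc 0 1) ∧
      (∀ t ∈ Set.Icc (0:ℝ) 1, γ i t ∈ Metric.ball (0 : ℂ) 1 \ {0}) ∧
      γ i 0 = z i ∧ γ i 1 = z (i + 1) ∧ hypLength (γ i) ≤ d) →
    (∃ w : ℝ → ℂ, ContinuousOn w (Set.Icc 0 (n : ℝ)) ∧
      (∀ t ∈ Set.Ico (0:ℝ) (n : ℝ),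
        Complex.exp (w t) = γ ⌊t⌋₊ (t - (⌊t⌋₊ : ℝ))) ∧
      Complex.exp (w (n : ℝ)) = z n ∧
      2 * Real.pi ≤ |(w (n : ℝ)).im - (w 0).im|) →
    ∀ φ : ℂ → ℂ,
      IsHoloCover φ (Metric.ball 0 1 \ {x : ℂ | ∃ i < n, z i = x}) → φ 0 = 0 →
      Real.log ‖deriv φ 0‖ ≤
        Real.log ((Finset.range n).sup'
          (Finset.nonempty_range_iff.mpr (Nat.one_le_iff_ne_zero.mp hn))
          fun i => ‖z i‖) / K ∧
      Real.log ((Finset.range n).sup'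
          (Finset.nonempty_range_iff.mpr (Nat.one_le_iff_ne_zero.mp hn))
          fun i => ‖z i‖) / K < 0 := by
  intro d hd
  refine ⟨256 * Real.exp d, by linarith [Real.one_lt_exp_iff.2 hd], ?_⟩
  rintro n hn z hz - γ hγ ⟨w, hw, hexp, hexp_end, him⟩ φ hφ hφ0
  have hturn : w n ≠ w 0 := fun h => by
    rw [h, sub_self, abs_zero] at him
    exact him.not_gt Real.two_pi_pos
  have hopen : IsOpen (ball 0 1 \ {x : ℂ | ∃ i < n, z i = x}) :=
    isOpen_ball.sdiff ((finite_Iio n).image z).isClosed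
  exact stmt12_general hd.le hn hz (fun i hi => ⟨(hγ i hi).1, fun t ht => ((hγ i hi).2.1 t ht).1,
    (hγ i hi).2.2.1, (hγ i hi).2.2.2.2⟩) hw hexp hexp_end hturn hφ.1 hφ.2.1 hφ0
    (deriv_ne_zero_of_isHoloCover hopen hφ (mem_ball_self one_pos))
end
end

section
/- For every d > 0 there exists R(d) > 0 such that for every integer q ≥ 3 and every r ∈ [e^{−1}, 1), if q·|ln r| ≥ R(d) then the hyperbolic distance in 𝔻 between r and r·e^{2πi/q} is at most d. -/
open Complex

noncomputable section

/-- Inverse hyperbolic tangent. -/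
def artanh (x : ℝ) : ℝ := (1 / 2) * Real.log ((1 + x) / (1 - x))

/-- Hyperbolic distance on the unit disc. -/
def hypDist (z w : ℂ) : ℝ :=
  2 * artanh (‖z - w‖ / ‖1 - (starRingEnd ℂ) z * w‖)

/-! Rotating `z` by an angle `θ` moves it by at most `‖z‖ |θ|`, while the denominator of the
pseudo-hyperbolic distance is at least `1 - ‖z‖² = 2 ‖z‖ sinh |log ‖z‖| ≥ 2 ‖z‖ |log ‖z‖|`. The
pseudo-hyperbolic distance is therefore at most `|θ| / (2 |log ‖z‖|)`, which for `θ = 2π / q` is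
`π / (q |log ‖z‖|)`; a hyperbolic distance of at most `d` amounts to a pseudo-hyperbolic distance of
at most `tanh (d / 2)`, so `R = π / tanh (d / 2)` works. -/

/-- The pseudo-hyperbolic distance on the unit disc, the argument of `artanh` in `hypDist`. -/
def pseudoHypDist (z w : ℂ) : ℝ :=
  ‖z - w‖ / ‖1 - (starRingEnd ℂ) z * w‖

theorem artanh_eq_real_artanh {x : ℝ} (hx : x ∈ Set.Icc (-1) 1) : artanh x = Real.artanh x :=
  (Real.artanh_eq_half_log hx).symm

theorem real_tanh_pos {x : ℝ} (hx : 0 < x) : 0 < Real.tanh x := by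
  rw [Real.tanh_eq_sinh_div_cosh]
  exact div_pos (Real.sinh_pos_iff.mpr hx) (Real.cosh_pos x)

theorem two_mul_mul_abs_log_le_one_sub_sq {x : ℝ} (hx0 : 0 < x) (hx1 : x ≤ 1) :
    2 * x * |Real.log x| ≤ 1 - x ^ 2 := by
  have hlog : |Real.log x| = Real.log x⁻¹ := by
    rw [abs_of_nonpos (Real.log_nonpos hx0.le hx1), Real.log_inv]
  calc 2 * x * |Real.log x| ≤ 2 * x * Real.sinh |Real.log x| := by
        gcongr
        exact Real.self_le_sinh_iff.mpr (abs_nonneg _)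
    _ = 1 - x ^ 2 := by
        rw [hlog, Real.sinh_log (inv_pos.mpr hx0)]
        field_simp

theorem norm_sub_mul_exp_I_mul_ofReal_le (z : ℂ) (θ : ℝ) :
    ‖z - z * exp (I * θ)‖ ≤ ‖z‖ * |θ| := by
  calc ‖z - z * exp (I * θ)‖ = ‖z‖ * ‖exp (I * θ) - 1‖ := by
        rw [norm_sub_rev, ← mul_sub_one, norm_mul]
    _ ≤ ‖z‖ * |θ| := by
        gcongr
        exact Real.norm_exp_I_mul_ofReal_sub_one_le

theorem one_sub_norm_mul_norm_le (z w : ℂ) :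
    1 - ‖z‖ * ‖w‖ ≤ ‖1 - (starRingEnd ℂ) z * w‖ := by
  simpa only [norm_one, norm_mul, RCLike.norm_conj] using
    norm_sub_norm_le 1 ((starRingEnd ℂ) z * w)

theorem pseudoHypDist_mul_exp_I_mul_ofReal_le {z : ℂ} (hz0 : z ≠ 0) (hz1 : ‖z‖ < 1) (θ : ℝ) :
    pseudoHypDist z (z * exp (I * θ)) ≤ |θ| / (2 * |Real.log ‖z‖|) := by
  have hz : 0 < ‖z‖ := norm_pos_iff.mpr hz0
  have hlog : 0 < |Real.log ‖z‖| := abs_pos.mpr (Real.log_neg hz hz1).ne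
  have hden : 2 * ‖z‖ * |Real.log ‖z‖| ≤ ‖1 - (starRingEnd ℂ) z * (z * exp (I * θ))‖ :=
    calc 2 * ‖z‖ * |Real.log ‖z‖| ≤ 1 - ‖z‖ ^ 2 := two_mul_mul_abs_log_le_one_sub_sq hz hz1.le
      _ = 1 - ‖z‖ * ‖z * exp (I * θ)‖ := by
        rw [norm_mul, norm_exp_I_mul_ofReal, mul_one, sq]
      _ ≤ ‖1 - (starRingEnd ℂ) z * (z * exp (I * θ))‖ := one_sub_norm_mul_norm_le _ _
  calc pseudoHypDist z (z * exp (I * θ))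
      ≤ ‖z‖ * |θ| / (2 * ‖z‖ * |Real.log ‖z‖|) :=
        div_le_div₀ (by positivity) (norm_sub_mul_exp_I_mul_ofReal_le z θ) (by positivity) hden
    _ = |θ| / (2 * |Real.log ‖z‖|) := by field_simp

theorem hypDist_le_of_pseudoHypDist_le_tanh {z w : ℂ} {d : ℝ}
    (h : pseudoHypDist z w ≤ Real.tanh (d / 2)) : hypDist z w ≤ d := by
  have hnonneg : 0 ≤ pseudoHypDist z w := div_nonneg (norm_nonneg _) (norm_nonneg _)
  have hlt : Real.tanh (d / 2) < 1 := Real.tanh_lt_one _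
  have hmem : pseudoHypDist z w ∈ Set.Icc (-1) 1 := ⟨by linarith, by linarith⟩
  calc hypDist z w = 2 * Real.artanh (pseudoHypDist z w) :=
        congrArg (2 * ·) (artanh_eq_real_artanh hmem)
    _ ≤ 2 * Real.artanh (Real.tanh (d / 2)) := by
        gcongr
        exact Real.artanh_le_artanh (by linarith) hlt h
    _ = d := by rw [Real.artanh_tanh, mul_div_cancel₀ d two_ne_zero]

theorem stmt14_general : ∀ d > (0 : ℝ), ∃ R > (0 : ℝ), ∀ (q : ℝ) (z : ℂ), z ≠ 0 → ‖z‖ < 1 →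
    R ≤ q * |Real.log ‖z‖| → hypDist z (z * exp (2 * Real.pi * I / q)) ≤ d := by
  intro d hd
  have htanh : 0 < Real.tanh (d / 2) := real_tanh_pos (half_pos hd)
  have hR : 0 < Real.pi / Real.tanh (d / 2) := div_pos Real.pi_pos htanh
  refine ⟨Real.pi / Real.tanh (d / 2), hR, fun q z hz0 hz1 hq ↦ ?_⟩
  have hqlog : 0 < q * |Real.log ‖z‖| := hR.trans_le hq
  have hq0 : 0 < q := pos_of_mul_pos_left hqlog (abs_nonneg _)
  have hangle : (2 * Real.pi * I / q : ℂ) = I * (2 * Real.pi / q : ℝ) := by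
    push_cast
    ring
  rw [hangle]
  apply hypDist_le_of_pseudoHypDist_le_tanh
  calc pseudoHypDist z (z * exp (I * (2 * Real.pi / q : ℝ)))
      ≤ |2 * Real.pi / q| / (2 * |Real.log ‖z‖|) :=
        pseudoHypDist_mul_exp_I_mul_ofReal_le hz0 hz1 _
    _ = Real.pi / (q * |Real.log ‖z‖|) := by
        rw [abs_of_pos (by positivity)]
        field_simp
    _ ≤ Real.tanh (d / 2) := (div_le_comm₀ htanh hqlog).mp hq

/-- For every `d > 0` there is `R(d) > 0` such that for all integers `q ≥ 3`
and all `r ∈ [e⁻¹, 1)`, if `q·|ln r| ≥ R(d)` then the hyperbolic distance in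
`𝔻` between `r` and `r·e^{2πi/q}` is at most `d`. -/
theorem stmt14 : ∀ d > (0 : ℝ), ∃ R > (0 : ℝ), ∀ q : ℕ, 3 ≤ q → ∀ r : ℝ,
    Real.exp (-1) ≤ r → r < 1 → R ≤ (q : ℝ) * |Real.log r| →
    hypDist (r : ℂ) ((r : ℂ) * Complex.exp (2 * Real.pi * Complex.I / q)) ≤ d := by
  intro d hd
  obtain ⟨R, hR, hdist⟩ := stmt14_general d hd
  refine ⟨R, hR, fun q _ r hr0 hr1 hq ↦ ?_⟩
  have hr : 0 < r := (Real.exp_pos _).trans_le hr0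
  have hnorm : ‖(r : ℂ)‖ = r := Complex.norm_of_nonneg hr.le
  exact mod_cast hdist q r (ofReal_ne_zero.mpr hr.ne') (hnorm.trans_lt hr1) (by rwa [hnorm])
end
end
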